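/- Let d ≥ 2, α ∈ (1,2), T > 0, and for 0 < t ≤ T define the semigroup (P_t φ)(x) = ∫_{ℝ^d} φ(x + y) p_t(y) dy acting on bounded measurable functions φ : ℝ^d → ℝ, where p_t(x) = (2π)^{−d} ∫_{ℝ^d} cos(⟨x,u⟩) e^{−tΨ(u)} du and Ψ(u) = ∫_{|y|≤1} (1 − cos(⟨u,y⟩)) |y|^{−(d+α)} dy. Then for each 0 < t ≤ T, P_t φ is continuously differentiable, and there exists a constant C < ∞ (depending only on d, α, T) such that |∂(P_t φ)/∂x_i (x)| ≤ C ‖φ‖_∞ t^{−1/α} for all x ∈ ℝ^d, all 0 < t ≤ T, and all i = 1,…,d, where ‖φ‖_∞ = sup_{x∈ℝ^d} |φ(x)|. -/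

import Mathlib

open MeasureTheory Metric
open scoped RealInnerProductSpace

/-- Characteristic exponent of the truncated `α`-stable process. -/
noncomputable def Psi (d : ℕ) (α : ℝ) (u : EuclideanSpace ℝ (Fin d)) : ℝ :=
  ∫ y in Metric.closedBall (0 : EuclideanSpace ℝ (Fin d)) 1,
    (1 - Real.cos ⟪u, y⟫) / ‖y‖ ^ ((d : ℝ) + α)

/-- Transition density of the truncated `α`-stable process, via Fourier inversion. -/
noncomputable def pdens (d : ℕ) (α : ℝ) (t : ℝ) (x : EuclideanSpace ℝ (Fin d)) : ℝ :=
  ((2 * Real.pi) ^ d)⁻¹ *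
    ∫ u : EuclideanSpace ℝ (Fin d), Real.cos ⟪x, u⟫ * Real.exp (-t * Psi d α u)

/-- The semigroup `(P_t φ)(x) = ∫ φ(x+y) p_t(y) dy`. -/
noncomputable def Pt (d : ℕ) (α : ℝ) (φ : EuclideanSpace ℝ (Fin d) → ℝ) (t : ℝ)
    (x : EuclideanSpace ℝ (Fin d)) : ℝ :=
  ∫ y : EuclideanSpace ℝ (Fin d), φ (x + y) * pdens d α t y

/-
Put `r = (t / T) ^ (1 / α) ≤ 1` and split the jumps of the process at size `r`. By scaling, the
jumps of size at most `r` contribute the exponent `T Ψ(r u)` at time `t`, hence the density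
`q(x) = r⁻ᵈ p_T(x / r)`; the larger jumps have finite intensity and form a compound Poisson process,
with some law `μ` at time `t`. Therefore `p_t = q * μ` and `‖∇p_t‖₁ ≤ ‖∇q‖₁ = r⁻¹ ‖∇p_T‖₁`, where
`p_T` is a Schwartz function because `Ψ` is smooth with derivatives of polynomial growth and
`Ψ(u) ≥ κ |u| ^ α` for `|u| ≥ 1`. Finally `‖∇(P_t φ)‖ ≤ ‖φ‖_∞ ‖∇p_t‖₁`.
-/

open Module (finrank)
open scoped SchwartzMap

section SchwartzTranslates

variable {E F : Type*} [NormedAddCommGroup E] [NormedSpace ℝ E] [MeasurableSpace E]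
  [NormedAddCommGroup F] [NormedSpace ℝ F] {φ : E → ℝ} {M : ℝ}

lemma exists_integrable_norm_schwartz_sub_le (μ : Measure E) [μ.HasTemperateGrowth]
    (S : 𝓢(E, F)) (x₀ : E) :
    ∃ b : E → ℝ, Integrable b μ ∧ ∀ x ∈ ball x₀ 1, ∀ z, ‖S (z - x)‖ ≤ b z := by
  set n := μ.integrablePower
  obtain ⟨A, hA⟩ : ∃ A : ℝ, ∀ x, (1 + ‖x‖) ^ n * ‖S x‖ ≤ A :=
    ⟨_, fun x ↦ by
      simpa using SchwartzMap.one_add_le_sup_seminorm_apply (𝕜 := ℝ) (m := (n, 0)) (k := n)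
        (n := 0) le_rfl le_rfl S x⟩
  refine ⟨fun z ↦ (2 + ‖x₀‖) ^ n * A * (1 + ‖z‖) ^ (-(n : ℝ)),
    (Measure.integrable_pow_neg_integrablePower μ).const_mul _, fun x hx z ↦ ?_⟩
  beta_reduce
  rw [Real.rpow_neg (by positivity), Real.rpow_natCast, ← div_eq_mul_inv,
    le_div_iff₀ (by positivity)]
  have peetre : 1 + ‖z‖ ≤ (2 + ‖x₀‖) * (1 + ‖z - x‖) := by
    have hx₀ : ‖x - x₀‖ < 1 := by simpa [dist_eq_norm] using hx
    have hz : ‖z‖ ≤ ‖z - x‖ + ‖x - x₀‖ + ‖x₀‖ := by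
      simpa using norm_add₃_le (a := z - x) (b := x - x₀) (c := x₀)
    nlinarith [norm_nonneg (z - x), norm_nonneg x₀]
  calc ‖S (z - x)‖ * (1 + ‖z‖) ^ n
      ≤ ‖S (z - x)‖ * ((2 + ‖x₀‖) * (1 + ‖z - x‖)) ^ n := by gcongr
    _ = (2 + ‖x₀‖) ^ n * ((1 + ‖z - x‖) ^ n * ‖S (z - x)‖) := by rw [mul_pow]; ring
    _ ≤ (2 + ‖x₀‖) ^ n * A := by gcongr; exact hA _

lemma exists_integrable_norm_smul_schwartz_sub_le (μ : Measure E) [μ.HasTemperateGrowth]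
    (S : 𝓢(E, F)) (hM : ∀ x, |φ x| ≤ M) (x₀ : E) :
    ∃ b : E → ℝ, Integrable b μ ∧ ∀ x ∈ ball x₀ 1, ∀ z, ‖φ z • S (z - x)‖ ≤ b z := by
  obtain ⟨b, hb, hSb⟩ := exists_integrable_norm_schwartz_sub_le μ S x₀
  refine ⟨fun z ↦ M * b z, hb.const_mul M, fun x hx z ↦ ?_⟩
  rw [norm_smul]
  exact mul_le_mul (hM z) (hSb x hx z) (norm_nonneg _) ((abs_nonneg _).trans (hM z))

variable [BorelSpace E] [SecondCountableTopology E]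

lemma aestronglyMeasurable_smul_schwartz_sub (μ : Measure E) (S : 𝓢(E, F)) (hφ : Measurable φ)
    (x : E) : AEStronglyMeasurable (fun z ↦ φ z • S (z - x)) μ :=
  hφ.aestronglyMeasurable.smul (S.continuous.comp (continuous_sub_right x)).aestronglyMeasurable

variable {μ : Measure E} [μ.HasTemperateGrowth]

lemma continuous_integral_smul_schwartz_sub (S : 𝓢(E, F)) (hφ : Measurable φ)
    (hM : ∀ x, |φ x| ≤ M) : Continuous fun x ↦ ∫ z, φ z • S (z - x) ∂μ := by
  refine continuous_iff_continuousAt.2 fun x₀ ↦ ?_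
  obtain ⟨b, hb, hSb⟩ := exists_integrable_norm_smul_schwartz_sub_le μ S hM x₀
  refine continuousAt_of_dominated (bound := b)
    (.of_forall fun x ↦ aestronglyMeasurable_smul_schwartz_sub μ S hφ x) ?_ hb
    (.of_forall fun z ↦ ?_)
  · filter_upwards [ball_mem_nhds x₀ one_pos] with x hx using .of_forall (hSb x hx)
  · exact (continuous_const.smul (S.continuous.comp (continuous_sub_left z))).continuousAt

lemma hasFDerivAt_integral_smul_schwartz_sub (S : 𝓢(E, F)) (hφ : Measurable φ)
    (hM : ∀ x, |φ x| ≤ M) (x₀ : E) :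
    HasFDerivAt (fun x ↦ ∫ z, φ z • S (z - x) ∂μ)
      (∫ z, φ z • (-SchwartzMap.fderivCLM ℝ E F S) (z - x₀) ∂μ) x₀ := by
  obtain ⟨b, hb, hSb⟩ := exists_integrable_norm_smul_schwartz_sub_le μ S hM x₀
  obtain ⟨b', hb', hDb'⟩ :=
    exists_integrable_norm_smul_schwartz_sub_le μ (-SchwartzMap.fderivCLM ℝ E F S) hM x₀
  refine hasFDerivAt_integral_of_dominated_of_fderiv_le (s := ball x₀ 1) (bound := b')
    (F' := fun x z ↦ φ z • (-SchwartzMap.fderivCLM ℝ E F S) (z - x))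
    (ball_mem_nhds x₀ one_pos)
    (.of_forall fun x ↦ aestronglyMeasurable_smul_schwartz_sub μ S hφ x)
    (hb.mono' (aestronglyMeasurable_smul_schwartz_sub μ S hφ x₀)
      (.of_forall (hSb x₀ (mem_ball_self one_pos))))
    (aestronglyMeasurable_smul_schwartz_sub μ _ hφ x₀)
    (.of_forall fun z x hx ↦ hDb' x hx z) hb' (.of_forall fun z x _ ↦ ?_)
  have hS : HasFDerivAt (fun x ↦ S (z - x)) ((fderiv ℝ S (z - x)).comp (-.id ℝ E)) x :=
    S.differentiableAt.hasFDerivAt.comp x ((hasFDerivAt_id x).const_sub z)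
  refine (hS.const_smul (φ z)).congr_fderiv ?_
  ext v
  simp

lemma fderiv_integral_smul_schwartz_sub (S : 𝓢(E, F)) (hφ : Measurable φ)
    (hM : ∀ x, |φ x| ≤ M) :
    fderiv ℝ (fun x ↦ ∫ z, φ z • S (z - x) ∂μ) =
      fun x ↦ ∫ z, φ z • (-SchwartzMap.fderivCLM ℝ E F S) (z - x) ∂μ :=
  funext fun x ↦ (hasFDerivAt_integral_smul_schwartz_sub S hφ hM x).fderiv

lemma contDiff_one_integral_smul_schwartz_sub (S : 𝓢(E, F)) (hφ : Measurable φ)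
    (hM : ∀ x, |φ x| ≤ M) : ContDiff ℝ 1 fun x ↦ ∫ z, φ z • S (z - x) ∂μ := by
  refine contDiff_one_iff_fderiv.2
    ⟨fun x ↦ (hasFDerivAt_integral_smul_schwartz_sub S hφ hM x).differentiableAt, ?_⟩
  rw [fderiv_integral_smul_schwartz_sub S hφ hM]
  exact continuous_integral_smul_schwartz_sub _ hφ hM

end SchwartzTranslates

section SchwartzConvolution

variable {E F : Type*} [NormedAddCommGroup E] [NormedSpace ℝ E] [FiniteDimensional ℝ E]
  [MeasurableSpace E] [BorelSpace E] [NormedAddCommGroup F] [NormedSpace ℝ F] {φ : E → ℝ} {M : ℝ}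

lemma norm_fderiv_integral_smul_schwartz_sub_le (ν : Measure E) [ν.IsAddHaarMeasure]
    (S : 𝓢(E, F)) (hφ : Measurable φ) (hM : ∀ x, |φ x| ≤ M) (x : E) :
    ‖fderiv ℝ (fun x ↦ ∫ z, φ z • S (z - x) ∂ν) x‖ ≤ M * ∫ y, ‖fderiv ℝ S y‖ ∂ν := by
  set D := -SchwartzMap.fderivCLM ℝ E F S
  have hD : Integrable (fun z ↦ ‖D (z - x)‖) ν := (D.integrable.comp_sub_right x).norm
  calc ‖fderiv ℝ (fun x ↦ ∫ z, φ z • S (z - x) ∂ν) x‖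
      = ‖∫ z, φ z • D (z - x) ∂ν‖ := by rw [fderiv_integral_smul_schwartz_sub S hφ hM]
    _ ≤ ∫ z, M * ‖D (z - x)‖ ∂ν := by
        refine norm_integral_le_of_norm_le (hD.const_mul M) (.of_forall fun z ↦ ?_)
        rw [norm_smul]
        gcongr
        exact hM z
    _ = M * ∫ y, ‖D y‖ ∂ν := by
        rw [integral_const_mul, integral_sub_right_eq_self (fun z ↦ ‖D z‖) x]
    _ = M * ∫ y, ‖fderiv ℝ S y‖ ∂ν := by simp [D]

lemma integral_norm_fderiv_integral_schwartz_sub_le (ν : Measure E) [ν.IsAddHaarMeasure]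
    (μ : Measure E) [IsFiniteMeasure μ] (S : 𝓢(E, F)) :
    ∫ y, ‖fderiv ℝ (fun y ↦ ∫ z, S (z - y) ∂μ) y‖ ∂ν ≤
      μ.real Set.univ * ∫ y, ‖fderiv ℝ S y‖ ∂ν := by
  set D := -SchwartzMap.fderivCLM ℝ E F S
  have hderiv : fderiv ℝ (fun y ↦ ∫ z, S (z - y) ∂μ) = fun y ↦ ∫ z, D (z - y) ∂μ := by
    simpa only [one_smul] using fderiv_integral_smul_schwartz_sub (μ := μ) S
      (φ := fun _ ↦ 1) measurable_const (fun _ ↦ abs_one.le)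
  have hcont : Continuous fun y ↦ ∫ z, D (z - y) ∂μ := by
    simpa only [one_smul] using continuous_integral_smul_schwartz_sub (μ := μ) D
      (φ := fun _ ↦ 1) measurable_const (fun _ ↦ abs_one.le)
  have tonelli : ∫⁻ y, ‖∫ z, D (z - y) ∂μ‖ₑ ∂ν ≤ μ Set.univ * ∫⁻ y, ‖D y‖ₑ ∂ν :=
    calc ∫⁻ y, ‖∫ z, D (z - y) ∂μ‖ₑ ∂ν ≤ ∫⁻ y, ∫⁻ z, ‖D (z - y)‖ₑ ∂μ ∂ν :=
          lintegral_mono fun y ↦ enorm_integral_le_lintegral_enorm _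
      _ = ∫⁻ z, ∫⁻ y, ‖D (z - y)‖ₑ ∂ν ∂μ := lintegral_lintegral_swap
          (D.continuous.comp (continuous_snd.sub continuous_fst)).enorm.measurable.aemeasurable
      _ = ∫⁻ _, ∫⁻ y, ‖D y‖ₑ ∂ν ∂μ := by
          simp only [lintegral_sub_left_eq_self (fun y ↦ ‖D y‖ₑ)]
      _ = μ Set.univ * ∫⁻ y, ‖D y‖ₑ ∂ν := by rw [lintegral_const, mul_comm]
  calc ∫ y, ‖fderiv ℝ (fun y ↦ ∫ z, S (z - y) ∂μ) y‖ ∂ν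
      = (∫⁻ y, ‖∫ z, D (z - y) ∂μ‖ₑ ∂ν).toReal := by
        rw [hderiv, integral_norm_eq_lintegral_enorm hcont.aestronglyMeasurable]
    _ ≤ (μ Set.univ * ∫⁻ y, ‖D y‖ₑ ∂ν).toReal :=
        ENNReal.toReal_mono
          (ENNReal.mul_ne_top (measure_ne_top _ _) D.integrable.hasFiniteIntegral.ne) tonelli
    _ = μ.real Set.univ * ∫ y, ‖fderiv ℝ S y‖ ∂ν := by
        rw [ENNReal.toReal_mul,
          ← integral_norm_eq_lintegral_enorm D.integrable.aestronglyMeasurable]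
        simp [D, Measure.real]

end SchwartzConvolution

section CompoundPoisson

variable {E : Type*} [NormedAddCommGroup E] [MeasurableSpace E]

/-- The `n`-fold convolution power of a measure, with `convPow ν 0` the unit mass at `0`. -/
noncomputable def convPow (ν : Measure E) : ℕ → Measure E
  | 0 => Measure.dirac 0
  | n + 1 => (convPow ν n).conv ν

/-- The law of a compound Poisson variable with jump intensity `ν`, for a finite measure `ν` that
need not be normalized: its weights are `exp (-ν(E)) / n!` on the `n`-th convolution power. -/
noncomputable def compoundPoisson (ν : Measure E) : Measure E :=
  .sum fun n : ℕ ↦ ENNReal.ofReal (Real.exp (-ν.real Set.univ) / n.factorial) • convPow ν n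

variable [BorelSpace E] [SecondCountableTopology E] (ν : Measure E) [IsFiniteMeasure ν]

instance isFiniteMeasure_convPow (n : ℕ) : IsFiniteMeasure (convPow ν n) := by
  induction n with
  | zero => exact inferInstanceAs (IsFiniteMeasure (Measure.dirac 0))
  | succ n _ => exact inferInstanceAs (IsFiniteMeasure ((convPow ν n).conv ν))

lemma convPow_real_univ (n : ℕ) : (convPow ν n).real Set.univ = ν.real Set.univ ^ n := by
  induction n with
  | zero => simp [convPow]
  | succ n ih =>
    rw [convPow, Measure.conv, map_measureReal_apply (by fun_prop) .univ, Set.preimage_univ,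
      ← Set.univ_prod_univ, measureReal_prod_prod, ih, pow_succ]

instance isProbabilityMeasure_compoundPoisson : IsProbabilityMeasure (compoundPoisson ν) := by
  set m := ν.real Set.univ
  have hweights : HasSum (fun n : ℕ ↦ Real.exp (-m) / n.factorial * m ^ n) 1 := by
    have h := (NormedSpace.expSeries_div_hasSum_exp (𝔸 := ℝ) m).mul_left (Real.exp (-m))
    rw [← Real.exp_eq_exp_ℝ, ← Real.exp_add, neg_add_cancel, Real.exp_zero] at h
    exact h.congr_fun fun n ↦ by ring
  have hmass (n : ℕ) : (ENNReal.ofReal (Real.exp (-m) / n.factorial) • convPow ν n) Set.univ =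
      ENNReal.ofReal (Real.exp (-m) / n.factorial * m ^ n) := by
    rw [ENNReal.ofReal_mul (by positivity), ← convPow_real_univ, ofReal_measureReal]
    rfl
  refine ⟨?_⟩
  rw [compoundPoisson, Measure.sum_apply _ .univ, tsum_congr hmass,
    ← ENNReal.ofReal_tsum_of_nonneg (fun n ↦ by positivity) hweights.summable, hweights.tsum_eq,
    ENNReal.ofReal_one]

variable [InnerProductSpace ℝ E]

lemma charFun_convPow (n : ℕ) (u : E) : charFun (convPow ν n) u = charFun ν u ^ n := by
  induction n with
  | zero => simp [convPow, charFun_dirac]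
  | succ n ih => rw [convPow, charFun_conv, ih, pow_succ]

lemma charFun_compoundPoisson (u : E) :
    charFun (compoundPoisson ν) u = Complex.exp (charFun ν u - ν.real Set.univ) := by
  set m := ν.real Set.univ
  have hint : Integrable (fun x : E ↦ Complex.exp (⟪x, u⟫ * Complex.I)) (compoundPoisson ν) :=
    .of_bound (by fun_prop) 1 (.of_forall fun x ↦ (Complex.norm_exp_ofReal_mul_I _).le)
  have hterm (n : ℕ) : ∫ x, Complex.exp (⟪x, u⟫ * Complex.I)
      ∂(ENNReal.ofReal (Real.exp (-m) / n.factorial) • convPow ν n) =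
        Complex.exp (-m) * (charFun ν u ^ n / n.factorial) := by
    rw [integral_smul_measure, ← charFun_apply, charFun_convPow,
      ENNReal.toReal_ofReal (by positivity), Complex.real_smul]
    push_cast
    ring
  have hsum : HasSum (fun n : ℕ ↦ Complex.exp (-m) * (charFun ν u ^ n / n.factorial))
      (∫ x, Complex.exp (⟪x, u⟫ * Complex.I) ∂compoundPoisson ν) :=
    (hasSum_integral_measure hint).congr_fun fun n ↦ (hterm n).symm
  have hexp := (NormedSpace.expSeries_div_hasSum_exp (charFun ν u)).mul_left (Complex.exp (-m))
  rw [← Complex.exp_eq_exp_ℂ, ← Complex.exp_add, neg_add_eq_sub] at hexp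
  rw [charFun_apply, hsum.unique hexp]

end CompoundPoisson

section TemperateGrowth

lemma hasTemperateGrowth_of_fderiv_apply {E F : Type*} [NormedAddCommGroup E] [NormedSpace ℝ E]
    [FiniteDimensional ℝ E] [NormedAddCommGroup F] [NormedSpace ℝ F] {f : E → F}
    (hf : Differentiable ℝ f) (hf' : ∀ v, (fun u ↦ fderiv ℝ f u v).HasTemperateGrowth) {k : ℕ}
    {C : ℝ} (hC : ∀ u, ‖f u‖ ≤ C * (1 + ‖u‖) ^ k) : f.HasTemperateGrowth := by
  let b := Module.finBasis ℝ E
  let coord (i) : E →L[ℝ] ℝ := (b.coord i).toContinuousLinearMap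
  have hexpand : fderiv ℝ f = fun u ↦
      ∑ i, ContinuousLinearMap.smulRightL ℝ E F (coord i) (fderiv ℝ f u (b i)) := by
    ext u v
    conv_lhs => rw [← b.sum_repr v, map_sum]
    simp [coord]
  refine .of_fderiv ?_ hf hC
  rw [hexpand]
  exact .sum fun i _ ↦ (ContinuousLinearMap.hasTemperateGrowth _).comp (hf' (b i))

variable {E : Type*} [NormedAddCommGroup E] [InnerProductSpace ℝ E]

lemma hasFDerivAt_inner_left (u y : E) : HasFDerivAt (fun u : E ↦ ⟪u, y⟫) (innerSL ℝ y) u := by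
  simpa [real_inner_comm] using (innerSL ℝ y).hasFDerivAt (x := u)

lemma abs_sin_inner_le (u y : E) : |Real.sin ⟪u, y⟫| ≤ ‖u‖ * ‖y‖ :=
  Real.abs_sin_le_abs.trans (abs_real_inner_le_norm u y)

lemma abs_sin_inner_mul_le (a : ℝ) (u y : E) :
    |Real.sin ⟪u, y⟫ * a| ≤ ‖u‖ * (‖y‖ * |a|) := by
  rw [abs_mul, ← mul_assoc]
  exact mul_le_mul_of_nonneg_right (abs_sin_inner_le u y) (abs_nonneg a)

lemma norm_one_sub_cos_inner_le (u y : E) : ‖1 - Real.cos ⟪u, y⟫‖ ≤ ‖u‖ ^ 2 / 2 * ‖y‖ ^ 2 := by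
  have hcos := Real.one_sub_sq_div_two_le_cos (x := ⟪u, y⟫)
  have hinner : ⟪u, y⟫ ^ 2 ≤ (‖u‖ * ‖y‖) ^ 2 := sq_le_sq' (neg_le_of_abs_le
    (abs_real_inner_le_norm u y)) (real_inner_le_norm u y)
  rw [Real.norm_of_nonneg (sub_nonneg.2 (Real.cos_le_one _))]
  linarith

variable [MeasurableSpace E] {ν : Measure E}

lemma norm_integral_sin_inner_mul_le {f : E → ℝ} (hf : Integrable (fun y ↦ ‖y‖ * |f y|) ν)
    (u : E) : ‖∫ y, Real.sin ⟪u, y⟫ * f y ∂ν‖ ≤ ‖u‖ * ∫ y, ‖y‖ * |f y| ∂ν := by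
  rw [← integral_const_mul]
  exact norm_integral_le_of_norm_le (hf.const_mul _)
    (.of_forall fun y ↦ abs_sin_inner_mul_le (f y) u y)

variable [BorelSpace E] [SecondCountableTopology E]

set_option maxSynthPendingDepth 3 in
lemma hasTemperateGrowth_integral_cos_inner_mul {f : E → ℝ}
    (hfm : AEStronglyMeasurable f ν) (hf : ∀ n : ℕ, Integrable (fun y ↦ ‖y‖ ^ n * |f y|) ν) :
    (fun u ↦ ∫ y, Real.cos ⟪u, y⟫ * f y ∂ν).HasTemperateGrowth := by
  let L : E →L[ℝ] E →L[ℝ] ℝ := (-(2 * Real.pi)⁻¹) • innerSL ℝ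
  let g (y : E) : ℂ := f y
  have hgm : AEStronglyMeasurable g ν := Complex.continuous_ofReal.comp_aestronglyMeasurable hfm
  have hg (n : ℕ) : Integrable (fun y ↦ ‖y‖ ^ n * ‖g y‖) ν := by simpa [g] using hf n
  have hfourier :
      (VectorFourier.fourierIntegral Real.fourierChar ν L.toLinearMap₁₂ g).HasTemperateGrowth := by
    refine ⟨VectorFourier.contDiff_fourierIntegral L fun n _ ↦ hg n, fun n ↦
      ⟨0, ∫ y, ‖VectorFourier.fourierPowSMulRight L g y n‖ ∂ν, fun u ↦ ?_⟩⟩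
    rw [VectorFourier.iteratedFDeriv_fourierIntegral L (N := n) (fun n _ ↦ hg n) hgm le_rfl]
    simpa using VectorFourier.norm_fourierIntegral_le_integral_norm _ _ _ _ _
  have hre : (fun u ↦ ∫ y, Real.cos ⟪u, y⟫ * f y ∂ν) = fun u ↦
      Complex.reCLM (VectorFourier.fourierIntegral Real.fourierChar ν L.toLinearMap₁₂ g u) := by
    ext u
    rw [VectorFourier.fourierIntegral, ← ContinuousLinearMap.integral_comp_comm]
    · refine integral_congr_ae (.of_forall fun y ↦ ?_)
      have hphase : 2 * Real.pi * -(L y u) = ⟪u, y⟫ := by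
        have hL : L y u = -(2 * Real.pi)⁻¹ * ⟪y, u⟫ := rfl
        rw [hL, real_inner_comm]
        field_simp
      change _ = (Real.fourierChar (-(L y u)) • (f y : ℂ)).re
      rw [Circle.smul_def, Real.fourierChar_apply, hphase,
        smul_eq_mul, Complex.re_mul_ofReal, Complex.exp_ofReal_mul_I_re]
    · have hg0 : Integrable g ν := by
        rw [← integrable_norm_iff hgm]
        simpa using hg 0
      exact (VectorFourier.fourierIntegral_convergent_iff Real.continuous_fourierChar
        L.continuous₂ u).2 hg0
  rw [hre]
  exact Complex.reCLM.hasTemperateGrowth.comp hfourier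

lemma integrable_smul_innerSL {f : E → ℝ} (hfm : AEStronglyMeasurable f ν)
    (hf : Integrable (fun y ↦ ‖y‖ * |f y|) ν) : Integrable (fun y ↦ f y • innerSL ℝ y) ν := by
  have hinner : AEStronglyMeasurable (fun y : E ↦ innerSL ℝ y) ν :=
    (innerSL ℝ).continuous.comp_aestronglyMeasurable aestronglyMeasurable_id
  refine hf.mono' (hfm.smul hinner) (.of_forall fun y ↦ ?_)
  rw [norm_smul, innerSL_apply_norm, mul_comm, Real.norm_eq_abs]

lemma integral_smul_innerSL_apply [CompleteSpace E] {f : E → ℝ} (hfm : AEStronglyMeasurable f ν)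
    (hf : Integrable (fun y ↦ ‖y‖ * |f y|) ν) (v : E) :
    (∫ y, f y • innerSL ℝ y ∂ν) v = ∫ y, f y * ⟪y, v⟫ ∂ν := by
  rw [ContinuousLinearMap.integral_apply (integrable_smul_innerSL hfm hf)]
  simp only [smul_apply, innerSL_apply_apply, smul_eq_mul]

lemma integrable_norm_mul_abs_cos_inner_mul {f : E → ℝ} (hfm : AEStronglyMeasurable f ν)
    (hf : Integrable (fun y ↦ ‖y‖ * |f y|) ν) (u : E) :
    Integrable (fun y ↦ ‖y‖ * |Real.cos ⟪u, y⟫ * f y|) ν := by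
  refine hf.mono' (by fun_prop) (.of_forall fun y ↦ ?_)
  rw [Real.norm_of_nonneg (by positivity), abs_mul]
  gcongr
  exact mul_le_of_le_one_left (abs_nonneg _) (Real.abs_cos_le_one _)

lemma hasFDerivAt_integral_sin_inner_mul {f : E → ℝ} (hfm : AEStronglyMeasurable f ν)
    (hf : Integrable (fun y ↦ ‖y‖ * |f y|) ν) (u : E) :
    HasFDerivAt (fun u ↦ ∫ y, Real.sin ⟪u, y⟫ * f y ∂ν)
      (∫ y, (Real.cos ⟪u, y⟫ * f y) • innerSL ℝ y ∂ν) u := by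
  have hsin (u : E) : AEStronglyMeasurable (fun y ↦ Real.sin ⟪u, y⟫ * f y) ν := by fun_prop
  refine hasFDerivAt_integral_of_dominated_of_fderiv_le (s := Set.univ)
    (F' := fun u y ↦ (Real.cos ⟪u, y⟫ * f y) • innerSL ℝ y) Filter.univ_mem (.of_forall hsin)
    ((hf.const_mul ‖u‖).mono' (hsin u) (.of_forall fun y ↦ abs_sin_inner_mul_le (f y) u y))
    (integrable_smul_innerSL (by fun_prop)
      (integrable_norm_mul_abs_cos_inner_mul hfm hf u)).aestronglyMeasurable
    (.of_forall fun y u _ ↦ ?_) hf (.of_forall fun y u _ ↦ ?_)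
  · rw [norm_smul, norm_mul, innerSL_apply_norm, mul_comm ‖y‖]
    exact mul_le_mul_of_nonneg_right
      (mul_le_of_le_one_left (norm_nonneg _) (Real.abs_cos_le_one _)) (norm_nonneg _)
  · refine ((hasFDerivAt_inner_left u y).sin.mul_const (f y)).congr_fderiv ?_
    rw [smul_smul, mul_comm]

lemma hasTemperateGrowth_integral_sin_inner_mul [FiniteDimensional ℝ E] {f : E → ℝ}
    (hfm : AEStronglyMeasurable f ν) (hf : ∀ n : ℕ, Integrable (fun y ↦ ‖y‖ ^ (n + 1) * |f y|) ν) :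
    (fun u ↦ ∫ y, Real.sin ⟪u, y⟫ * f y ∂ν).HasTemperateGrowth := by
  have hf1 : Integrable (fun y ↦ ‖y‖ * |f y|) ν := by simpa using hf 0
  have hderiv := hasFDerivAt_integral_sin_inner_mul hfm hf1
  refine hasTemperateGrowth_of_fderiv_apply (fun u ↦ (hderiv u).differentiableAt) (fun v ↦ ?_)
    (k := 1) (C := ∫ y, ‖y‖ * |f y| ∂ν) fun u ↦ ?_
  · have happly : (fun u ↦ fderiv ℝ (fun u ↦ ∫ y, Real.sin ⟪u, y⟫ * f y ∂ν) u v) =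
        fun u ↦ ∫ y, Real.cos ⟪u, y⟫ * (f y * ⟪y, v⟫) ∂ν := by
      ext u
      rw [(hderiv u).fderiv, integral_smul_innerSL_apply (by fun_prop)
        (integrable_norm_mul_abs_cos_inner_mul hfm hf1 u)]
      simp only [mul_assoc]
    rw [happly]
    refine hasTemperateGrowth_integral_cos_inner_mul (by fun_prop) fun n ↦
      ((hf n).const_mul ‖v‖).mono' (by fun_prop) (.of_forall fun y ↦ ?_)
    rw [Real.norm_of_nonneg (by positivity), abs_mul]
    calc ‖y‖ ^ n * (|f y| * |⟪y, v⟫|) ≤ ‖y‖ ^ n * (|f y| * (‖y‖ * ‖v‖)) := by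
          gcongr
          exact abs_real_inner_le_norm y v
      _ = ‖v‖ * (‖y‖ ^ (n + 1) * |f y|) := by ring
  · refine (norm_integral_sin_inner_mul_le hf1 u).trans ?_
    rw [mul_comm, pow_one]
    exact mul_le_mul_of_nonneg_left (by linarith) (integral_nonneg fun y ↦ by positivity)

end TemperateGrowth

section NegInvariant

variable {G : Type*} [MeasurableSpace G] [InvolutiveNeg G] (ν : Measure G) [ν.IsNegInvariant]

lemma isNegInvariant_smul (c : NNReal) : (c • ν).IsNegInvariant :=
  ⟨by rw [Measure.neg, Measure.map_smul, Measure.map_neg_eq_self]⟩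

variable [MeasurableNeg G]

lemma isNegInvariant_restrict {A : Set G} (hA : -A = A) : (ν.restrict A).IsNegInvariant := by
  refine ⟨?_⟩
  conv_lhs => rw [← hA]
  exact ((Measure.measurePreserving_neg ν).restrict_preimage_emb
    (MeasurableEquiv.neg G).measurableEmbedding A).map_eq

lemma isNegInvariant_withDensity {f : G → ENNReal} (hf : ∀ y, f (-y) = f y) :
    (ν.withDensity f).IsNegInvariant := by
  refine ⟨Measure.ext fun A hA ↦ ?_⟩
  rw [Measure.neg_apply, withDensity_apply _ hA.neg, withDensity_apply _ hA,
    ← (Measure.measurePreserving_neg ν).setLIntegral_comp_preimage_emb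
      (MeasurableEquiv.neg G).measurableEmbedding f A]
  simp only [hf]
  rfl

end NegInvariant

lemma isFiniteMeasure_restrict_compl_closedBall {E : Type*} [NormedAddCommGroup E]
    [MeasurableSpace E] {ν : Measure E} (hν : Integrable (fun y ↦ ‖y‖ ^ 2) ν) {r : ℝ} (hr : 0 < r) :
    IsFiniteMeasure (ν.restrict (closedBall 0 r)ᶜ) := by
  refine ⟨?_⟩
  rw [Measure.restrict_apply_univ]
  refine (measure_mono fun y hy ↦ ?_).trans_lt (hν.measure_norm_ge_lt_top (pow_pos hr 2))
  have hry : r < ‖y‖ := by simpa using hy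
  rw [Set.mem_ofPred_eq, Real.norm_of_nonneg (by positivity)]
  gcongr

section LevyExponent

variable {E : Type*} [NormedAddCommGroup E] [InnerProductSpace ℝ E] [MeasurableSpace E]

/-- The characteristic exponent of the symmetric pure-jump Lévy process with Lévy measure `ν`. Its
law at time `t` has characteristic function `exp (-t * levyExponent ν u)`. -/
noncomputable def levyExponent (ν : Measure E) (u : E) : ℝ := ∫ y, (1 - Real.cos ⟪u, y⟫) ∂ν

variable {ν : Measure E}

lemma levyExponent_nonneg (u : E) : 0 ≤ levyExponent ν u :=
  integral_nonneg fun _ ↦ sub_nonneg.2 (Real.cos_le_one _)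

lemma norm_levyExponent_le (hν : Integrable (fun y ↦ ‖y‖ ^ 2) ν) (u : E) :
    ‖levyExponent ν u‖ ≤ ‖u‖ ^ 2 / 2 * ∫ y, ‖y‖ ^ 2 ∂ν := by
  rw [← integral_const_mul]
  exact norm_integral_le_of_norm_le (hν.const_mul _) (.of_forall (norm_one_sub_cos_inner_le u))

variable [BorelSpace E] [SecondCountableTopology E]

lemma integrable_one_sub_cos_inner (hν : Integrable (fun y ↦ ‖y‖ ^ 2) ν) (u : E) :
    Integrable (fun y ↦ 1 - Real.cos ⟪u, y⟫) ν :=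
  (hν.const_mul _).mono' (by fun_prop) (.of_forall (norm_one_sub_cos_inner_le u))

lemma levyExponent_restrict_add_restrict_compl (hν : Integrable (fun y ↦ ‖y‖ ^ 2) ν) {A : Set E}
    (hA : MeasurableSet A) (u : E) :
    levyExponent (ν.restrict A) u + levyExponent (ν.restrict Aᶜ) u = levyExponent ν u :=
  integral_add_compl hA (integrable_one_sub_cos_inner hν u)

lemma integrable_norm_mul_abs_sin_inner (hν : Integrable (fun y ↦ ‖y‖ ^ 2) ν) (u : E) :
    Integrable (fun y ↦ ‖y‖ * |Real.sin ⟪u, y⟫|) ν := by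
  refine (hν.const_mul ‖u‖).mono' (by fun_prop) (.of_forall fun y ↦ ?_)
  rw [Real.norm_of_nonneg (by positivity)]
  calc ‖y‖ * |Real.sin ⟪u, y⟫| ≤ ‖y‖ * (‖u‖ * ‖y‖) := by
        gcongr
        exact abs_sin_inner_le u y
    _ = ‖u‖ * ‖y‖ ^ 2 := by ring

lemma hasFDerivAt_levyExponent (hν : Integrable (fun y ↦ ‖y‖ ^ 2) ν) (u : E) :
    HasFDerivAt (levyExponent ν) (∫ y, Real.sin ⟪u, y⟫ • innerSL ℝ y ∂ν) u := by
  refine hasFDerivAt_integral_of_dominated_of_fderiv_le (s := ball u 1)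
    (bound := fun y ↦ (‖u‖ + 1) * ‖y‖ ^ 2) (F' := fun u y ↦ Real.sin ⟪u, y⟫ • innerSL ℝ y)
    (ball_mem_nhds u one_pos) (.of_forall fun w ↦ by fun_prop) (integrable_one_sub_cos_inner hν u)
    (integrable_smul_innerSL (by fun_prop)
      (integrable_norm_mul_abs_sin_inner hν u)).aestronglyMeasurable
    (.of_forall fun y w hw ↦ ?_) (hν.const_mul _) (.of_forall fun y w _ ↦ ?_)
  · have hwu : ‖w‖ ≤ ‖u‖ + 1 := by
      linarith [norm_sub_norm_le w u, (dist_eq_norm w u).symm.trans_lt hw]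
    calc ‖Real.sin ⟪w, y⟫ • innerSL ℝ y‖ = |Real.sin ⟪w, y⟫| * ‖y‖ := by
          rw [norm_smul, innerSL_apply_norm, Real.norm_eq_abs]
      _ ≤ ((‖u‖ + 1) * ‖y‖) * ‖y‖ := by
          gcongr
          exact (abs_sin_inner_le w y).trans (by gcongr)
      _ = (‖u‖ + 1) * ‖y‖ ^ 2 := by ring
  · refine ((hasFDerivAt_inner_left w y).cos.const_sub 1).congr_fderiv ?_
    ext v
    simp

lemma hasTemperateGrowth_levyExponent [FiniteDimensional ℝ E]
    (hν : ∀ n : ℕ, Integrable (fun y ↦ ‖y‖ ^ (n + 2)) ν) :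
    (levyExponent ν).HasTemperateGrowth := by
  have hν2 : Integrable (fun y ↦ ‖y‖ ^ 2) ν := hν 0
  have hderiv := hasFDerivAt_levyExponent hν2
  refine hasTemperateGrowth_of_fderiv_apply (fun u ↦ (hderiv u).differentiableAt) (fun v ↦ ?_)
    (k := 2) (C := ∫ y, ‖y‖ ^ 2 ∂ν) fun u ↦ (norm_levyExponent_le hν2 u).trans ?_
  · have happly : (fun u ↦ fderiv ℝ (levyExponent ν) u v) =
        fun u ↦ ∫ y, Real.sin ⟪u, y⟫ * ⟪y, v⟫ ∂ν := by
      ext u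
      rw [(hderiv u).fderiv, integral_smul_innerSL_apply (by fun_prop)
        (integrable_norm_mul_abs_sin_inner hν2 u)]
    rw [happly]
    refine hasTemperateGrowth_integral_sin_inner_mul (by fun_prop) fun n ↦
      ((hν n).const_mul ‖v‖).mono' (by fun_prop) (.of_forall fun y ↦ ?_)
    rw [Real.norm_of_nonneg (by positivity)]
    calc ‖y‖ ^ (n + 1) * |⟪y, v⟫| ≤ ‖y‖ ^ (n + 1) * (‖y‖ * ‖v‖) := by
          gcongr
          exact abs_real_inner_le_norm y v
      _ = ‖v‖ * ‖y‖ ^ (n + 2) := by ring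
  · rw [mul_comm]
    refine mul_le_mul_of_nonneg_left ?_ (integral_nonneg fun y ↦ by positivity)
    nlinarith [norm_nonneg u]

lemma re_charFun [IsFiniteMeasure ν] (u : E) : (charFun ν u).re = ∫ y, Real.cos ⟪u, y⟫ ∂ν := by
  have hint : Integrable (fun y : E ↦ Complex.exp (⟪y, u⟫ * Complex.I)) ν :=
    .of_bound (by fun_prop) 1 (.of_forall fun y ↦ (Complex.norm_exp_ofReal_mul_I _).le)
  rw [charFun_apply, ← RCLike.re_to_complex, ← integral_re hint]
  simp only [RCLike.re_to_complex, Complex.exp_ofReal_mul_I_re, real_inner_comm]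

lemma im_charFun [IsFiniteMeasure ν] (u : E) : (charFun ν u).im = ∫ y, Real.sin ⟪u, y⟫ ∂ν := by
  have hint : Integrable (fun y : E ↦ Complex.exp (⟪y, u⟫ * Complex.I)) ν :=
    .of_bound (by fun_prop) 1 (.of_forall fun y ↦ (Complex.norm_exp_ofReal_mul_I _).le)
  rw [charFun_apply, ← RCLike.im_to_complex, ← integral_im hint]
  simp only [RCLike.im_to_complex, Complex.exp_ofReal_mul_I_im, real_inner_comm]

lemma integral_cos_inner_sub [IsFiniteMeasure ν] {h : E → ℝ} (hν : ∀ u, charFun ν u = h u)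
    (x u : E) : ∫ y, Real.cos ⟪y - x, u⟫ ∂ν = Real.cos ⟪x, u⟫ * h u := by
  have hcos : ∫ y, Real.cos ⟪u, y⟫ ∂ν = h u := by rw [← re_charFun, hν, Complex.ofReal_re]
  have hsin : ∫ y, Real.sin ⟪u, y⟫ ∂ν = 0 := by rw [← im_charFun, hν, Complex.ofReal_im]
  have hcosint : Integrable (fun y ↦ Real.cos ⟪u, y⟫) ν :=
    .of_bound (by fun_prop) 1 (.of_forall fun y ↦ Real.abs_cos_le_one _)
  have hsinint : Integrable (fun y ↦ Real.sin ⟪u, y⟫) ν :=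
    .of_bound (by fun_prop) 1 (.of_forall fun y ↦ Real.abs_sin_le_one _)
  simp only [real_inner_comm u, inner_sub_right, Real.cos_sub]
  rw [integral_add (hcosint.mul_const _) (hsinint.mul_const _), integral_mul_const,
    integral_mul_const, hcos, hsin, zero_mul, add_zero, mul_comm]

lemma charFun_eq_integral_cos_inner [IsFiniteMeasure ν] [ν.IsNegInvariant] (u : E) :
    charFun ν u = ∫ y, Real.cos ⟪u, y⟫ ∂ν := by
  refine Complex.ext (re_charFun u) ?_
  rw [im_charFun, Complex.ofReal_im]
  have hodd := integral_neg_eq_self (fun y ↦ Real.sin ⟪u, y⟫) ν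
  simp only [inner_neg_right, Real.sin_neg, integral_neg] at hodd
  linarith

lemma charFun_compoundPoisson_of_isNegInvariant [IsFiniteMeasure ν] [ν.IsNegInvariant] (u : E) :
    charFun (compoundPoisson ν) u = Real.exp (-levyExponent ν u) := by
  have hcos : Integrable (fun y ↦ Real.cos ⟪u, y⟫) ν :=
    .of_bound (by fun_prop) 1 (.of_forall fun y ↦ Real.abs_cos_le_one _)
  rw [charFun_compoundPoisson, charFun_eq_integral_cos_inner, levyExponent,
    integral_sub (integrable_const 1) hcos, integral_const]
  push_cast
  simp

lemma exists_isProbabilityMeasure_charFun_eq_exp_neg [IsFiniteMeasure ν] [ν.IsNegInvariant] {t : ℝ}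
    (ht : 0 ≤ t) : ∃ μ : Measure E, IsProbabilityMeasure μ ∧
      ∀ u, charFun μ u = Real.exp (-(t * levyExponent ν u)) := by
  lift t to NNReal using ht
  have := isNegInvariant_smul ν t
  refine ⟨compoundPoisson (t • ν), inferInstance, fun u ↦ ?_⟩
  rw [charFun_compoundPoisson_of_isNegInvariant, levyExponent, integral_smul_nnreal_measure]
  rfl

end LevyExponent

section ExpNeg

variable {E : Type*} [NormedAddCommGroup E] {f : E → ℝ}

lemma exists_one_add_norm_pow_mul_exp_neg_le (hf₀ : ∀ u, 0 ≤ f u) {α κ : ℝ} (hα : 0 < α)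
    (hκ : 0 < κ) (hf : ∀ u, 1 ≤ ‖u‖ → κ * ‖u‖ ^ α ≤ f u) (m : ℕ) :
    ∃ B, ∀ u, (1 + ‖u‖) ^ m * Real.exp (-f u) ≤ B := by
  obtain ⟨n, hn⟩ := exists_nat_ge (m / α)
  refine ⟨2 ^ m * (1 + n.factorial / κ ^ n), fun u ↦ ?_⟩
  have hconst : (1 : ℝ) ≤ 1 + n.factorial / κ ^ n := by
    linarith [show (0 : ℝ) ≤ n.factorial / κ ^ n by positivity]
  rcases le_total ‖u‖ 1 with hu | hu
  · calc (1 + ‖u‖) ^ m * Real.exp (-f u) ≤ 2 ^ m * 1 := by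
          gcongr
          · linarith
          · exact Real.exp_le_one_iff.2 (neg_nonpos.2 (hf₀ u))
      _ ≤ 2 ^ m * (1 + n.factorial / κ ^ n) := by gcongr
  · have hpow : ‖u‖ ^ m ≤ (‖u‖ ^ α) ^ n := by
      rw [← Real.rpow_natCast, ← Real.rpow_natCast, ← Real.rpow_mul (norm_nonneg u)]
      exact Real.rpow_le_rpow_of_exponent_le hu (by rwa [div_le_iff₀' hα] at hn)
    have hexp : (‖u‖ ^ α) ^ n ≤ n.factorial / κ ^ n * Real.exp (f u) := by
      have h := Real.pow_div_factorial_le_exp (κ * ‖u‖ ^ α) (by positivity) n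
      rw [div_le_iff₀ (by positivity), mul_pow, ← le_div_iff₀' (by positivity)] at h
      refine h.trans ?_
      rw [div_mul_eq_mul_div, mul_comm]
      gcongr
      exact hf u hu
    calc (1 + ‖u‖) ^ m * Real.exp (-f u) ≤ (2 * ‖u‖) ^ m * Real.exp (-f u) := by
          gcongr
          linarith
      _ ≤ 2 ^ m * (n.factorial / κ ^ n * Real.exp (f u)) * Real.exp (-f u) := by
          rw [mul_pow]
          gcongr
          exact hpow.trans hexp
      _ = 2 ^ m * (n.factorial / κ ^ n) := by
          rw [mul_assoc, mul_assoc, ← Real.exp_add, add_neg_cancel, Real.exp_zero, mul_one]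
      _ ≤ 2 ^ m * (1 + n.factorial / κ ^ n) := by gcongr; linarith

variable [NormedSpace ℝ E]

lemma exists_norm_iteratedFDeriv_exp_neg_le (hf : f.HasTemperateGrowth) (n : ℕ) :
    ∃ k : ℕ, ∃ C : ℝ, ∀ u,
      ‖iteratedFDeriv ℝ n (fun u ↦ Real.exp (-f u)) u‖ ≤ C * (1 + ‖u‖) ^ k * Real.exp (-f u) := by
  obtain ⟨k, C, hC, hfC⟩ := hf.neg.norm_iteratedFDeriv_le_uniform n
  refine ⟨k * n, n.factorial * (C + 1) ^ n, fun u ↦ ?_⟩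
  have hexp (i : ℕ) (_ : i ≤ n) : ‖iteratedFDeriv ℝ i Real.exp (-f u)‖ ≤ Real.exp (-f u) := by
    rw [norm_iteratedFDeriv_eq_norm_iteratedDeriv, iteratedDeriv_eq_iterate, Real.iter_deriv_exp,
      Real.norm_of_nonneg (Real.exp_nonneg _)]
  have hinner (i : ℕ) (hi : 1 ≤ i) (hin : i ≤ n) :
      ‖iteratedFDeriv ℝ i (fun u ↦ -f u) u‖ ≤ ((C + 1) * (1 + ‖u‖) ^ k) ^ i := by
    have hone : (1 : ℝ) ≤ (1 + ‖u‖) ^ k := one_le_pow₀ (by linarith [norm_nonneg u])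
    calc ‖iteratedFDeriv ℝ i (fun u ↦ -f u) u‖ ≤ C * (1 + ‖u‖) ^ k := hfC i hin u
      _ ≤ (C + 1) * (1 + ‖u‖) ^ k := by gcongr; linarith
      _ ≤ ((C + 1) * (1 + ‖u‖) ^ k) ^ i := le_self_pow₀ (by nlinarith) (by lia)
  calc ‖iteratedFDeriv ℝ n (fun u ↦ Real.exp (-f u)) u‖
      ≤ n.factorial * Real.exp (-f u) * ((C + 1) * (1 + ‖u‖) ^ k) ^ n :=
        norm_iteratedFDeriv_comp_le (N := n) Real.contDiff_exp
          (hf.neg.1.of_le (by exact_mod_cast le_top)) le_rfl u hexp hinner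
    _ = n.factorial * (C + 1) ^ n * (1 + ‖u‖) ^ (k * n) * Real.exp (-f u) := by
        rw [mul_pow, ← pow_mul]; ring

lemma exists_schwartzMap_eq_exp_neg (hf : f.HasTemperateGrowth)
    (hdecay : ∀ m : ℕ, ∃ B, ∀ u, (1 + ‖u‖) ^ m * Real.exp (-f u) ≤ B) :
    ∃ S : 𝓢(E, ℝ), ∀ u, S u = Real.exp (-f u) := by
  refine ⟨⟨fun u ↦ Real.exp (-f u), Real.contDiff_exp.comp hf.neg.1, fun k n ↦ ?_⟩, fun _ ↦ rfl⟩
  obtain ⟨l, C, hC⟩ := exists_norm_iteratedFDeriv_exp_neg_le hf n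
  obtain ⟨B, hB⟩ := hdecay (k + l)
  refine ⟨|C| * B, fun u ↦ ?_⟩
  calc ‖u‖ ^ k * ‖iteratedFDeriv ℝ n (fun u ↦ Real.exp (-f u)) u‖
      ≤ (1 + ‖u‖) ^ k * (|C| * (1 + ‖u‖) ^ l * Real.exp (-f u)) := by
        gcongr
        · linarith
        · exact (hC u).trans (by gcongr; exact le_abs_self C)
    _ = |C| * ((1 + ‖u‖) ^ (k + l) * Real.exp (-f u)) := by rw [pow_add]; ring
    _ ≤ |C| * B := by gcongr; exact hB u

end ExpNeg

section CosTransform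

variable {E : Type*} [NormedAddCommGroup E] [InnerProductSpace ℝ E] [FiniteDimensional ℝ E]
  [MeasurableSpace E] [BorelSpace E]

/-- The inverse Fourier transform of an even function, in the normalization
`(2π)⁻ᵈ ∫ cos ⟪x, u⟫ g u du` of probability theory. -/
noncomputable def cosTransform (g : E → ℝ) (x : E) : ℝ :=
  ((2 * Real.pi) ^ finrank ℝ E)⁻¹ * ∫ u, Real.cos ⟪x, u⟫ * g u

variable {g h : E → ℝ}

lemma cosTransform_comp_smul (g : E → ℝ) {r : ℝ} (hr : 0 < r) (x : E) :
    cosTransform (fun u ↦ g (r • u)) x = (r ^ finrank ℝ E)⁻¹ * cosTransform g (r⁻¹ • x) := by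
  have hscale (u : E) : ⟪r⁻¹ • x, r • u⟫ = ⟪x, u⟫ := by
    rw [real_inner_smul_left, real_inner_smul_right, inv_mul_cancel_left₀ hr.ne']
  have hsubst := Measure.integral_comp_smul volume (fun u ↦ Real.cos ⟪r⁻¹ • x, u⟫ * g u) r
  rw [abs_of_pos (by positivity), smul_eq_mul] at hsubst
  simp only [hscale] at hsubst
  rw [cosTransform, hsubst, cosTransform, mul_left_comm]

lemma exists_schwartzMap_eq_cosTransform (g : 𝓢(E, ℝ)) :
    ∃ S : 𝓢(E, ℝ), ∀ x, S x = cosTransform g x := by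
  let gC : 𝓢(E, ℂ) := g.postcompCLM Complex.ofRealCLM
  let dilation : E ≃L[ℝ] E :=
    .smulLeft (Units.mk0 (2 * Real.pi)⁻¹ (by positivity : (2 * Real.pi)⁻¹ ≠ 0))
  let S : 𝓢(E, ℝ) := (SchwartzMap.compCLMOfContinuousLinearEquiv ℝ dilation
    (FourierTransform.fourier gC)).postcompCLM Complex.reCLM
  refine ⟨((2 * Real.pi) ^ finrank ℝ E)⁻¹ • S, fun x ↦ ?_⟩
  have hphase (u : E) : 2 * Real.pi * -⟪u, (2 * Real.pi)⁻¹ • x⟫ = -⟪x, u⟫ := by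
    rw [real_inner_smul_right, real_inner_comm]
    field_simp
  have hint : Integrable fun u ↦ Real.fourierChar (-⟪u, (2 * Real.pi)⁻¹ • x⟫) • gC u :=
    (Real.fourierIntegral_convergent_iff _).2 gC.integrable
  have hS : S x = ∫ u, Real.cos ⟪x, u⟫ * g u :=
    calc S x = (∫ u, Real.fourierChar (-⟪u, (2 * Real.pi)⁻¹ • x⟫) • gC u).re := by
          rw [← Real.fourier_eq, ← SchwartzMap.fourier_coe]
          rfl
      _ = ∫ u, (Real.fourierChar (-⟪u, (2 * Real.pi)⁻¹ • x⟫) • gC u).re := (integral_re hint).symm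
      _ = ∫ u, Real.cos ⟪x, u⟫ * g u := by
          refine integral_congr_ae (.of_forall fun u ↦ ?_)
          change (Real.fourierChar (-⟪u, (2 * Real.pi)⁻¹ • x⟫) • (g u : ℂ)).re = _
          rw [Circle.smul_def, Real.fourierChar_apply, smul_eq_mul, Complex.re_mul_ofReal, hphase,
            Complex.exp_ofReal_mul_I_re, Real.cos_neg]
  rw [smul_apply, smul_eq_mul, hS, cosTransform]

lemma cosTransform_mul_eq_integral {μ : Measure E} [IsFiniteMeasure μ]
    (hμ : ∀ u, charFun μ u = h u) (hg : Integrable g) (x : E) :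
    cosTransform (fun u ↦ h u * g u) x = ∫ z, cosTransform g (z - x) ∂μ := by
  have hint : Integrable (Function.uncurry fun z u ↦ Real.cos ⟪z - x, u⟫ * g u)
      (μ.prod volume) := by
    have hgsnd : Integrable (fun p : E × E ↦ g p.2) (μ.prod volume) := hg.comp_snd μ
    exact hgsnd.bdd_mul (by fun_prop) (.of_forall fun p ↦ Real.abs_cos_le_one _)
  simp only [cosTransform]
  rw [integral_const_mul, integral_integral_swap hint]
  simp only [integral_mul_const, integral_cos_inner_sub hμ, mul_assoc]

lemma integral_norm_fderiv_cosTransform_comp_smul (g : E → ℝ) {r : ℝ} (hr : 0 < r) :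
    ∫ y, ‖fderiv ℝ (cosTransform fun u ↦ g (r • u)) y‖ =
      r⁻¹ * ∫ y, ‖fderiv ℝ (cosTransform g) y‖ := by
  have hscale : (cosTransform fun u ↦ g (r • u)) =
      (r ^ finrank ℝ E)⁻¹ • fun x ↦ cosTransform g (r⁻¹ • x) :=
    funext (cosTransform_comp_smul g hr)
  have hsubst := Measure.integral_comp_smul volume (fun y : E ↦ ‖fderiv ℝ (cosTransform g) y‖) r⁻¹
  rw [abs_of_pos (by positivity), smul_eq_mul, inv_pow, inv_inv] at hsubst
  simp only [hscale, fderiv_const_smul_field, Pi.smul_apply, fderiv_comp_smul, norm_smul]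
  rw [integral_const_mul, integral_const_mul, hsubst, Real.norm_of_nonneg (by positivity),
    Real.norm_of_nonneg (by positivity)]
  field_simp

lemma integral_norm_fderiv_cosTransform_mul_le {μ : Measure E} [IsProbabilityMeasure μ]
    (hμ : ∀ u, charFun μ u = h u) (g : 𝓢(E, ℝ)) :
    ∫ y, ‖fderiv ℝ (cosTransform fun u ↦ h u * g u) y‖ ≤
      ∫ y, ‖fderiv ℝ (cosTransform g) y‖ := by
  obtain ⟨S, hS⟩ := exists_schwartzMap_eq_cosTransform g
  have hconv : (cosTransform fun u ↦ h u * g u) = fun x ↦ ∫ z, S (z - x) ∂μ := by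
    simp only [funext (cosTransform_mul_eq_integral hμ g.integrable), hS]
  rw [hconv, ← funext hS]
  simpa using integral_norm_fderiv_integral_schwartz_sub_le volume μ S

end CosTransform

section TruncatedStable

variable {E : Type*} [NormedAddCommGroup E] [InnerProductSpace ℝ E] [FiniteDimensional ℝ E]
  [MeasurableSpace E] [BorelSpace E] {α r R : ℝ}

/-- The Lévy measure `|y|^{-(d + α)} dy` on `|y| ≤ R` of the `α`-stable process on `E` with jumps
truncated at size `R`, where `d` is the dimension of `E`. -/
noncomputable def truncatedStableMeasure (E : Type*) [NormedAddCommGroup E]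
    [InnerProductSpace ℝ E] [FiniteDimensional ℝ E] [MeasurableSpace E] [BorelSpace E]
    (α R : ℝ) : Measure E :=
  (volume.restrict (closedBall 0 R)).withDensity
    fun y ↦ ENNReal.ofReal (‖y‖ ^ (finrank ℝ E + α))⁻¹

/-- The characteristic exponent of the `α`-stable process on `E` with jumps truncated at size `R`;
it is `Psi` for `R = 1`. -/
noncomputable def truncatedStableExponent (α R : ℝ) (u : E) : ℝ :=
  levyExponent (truncatedStableMeasure E α R) u

instance isNegInvariant_truncatedStableMeasure :
    (truncatedStableMeasure E α R).IsNegInvariant := by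
  have := isNegInvariant_restrict (volume : Measure E) (A := closedBall 0 R) (by simp)
  exact isNegInvariant_withDensity _ fun y ↦ by rw [norm_neg]

lemma truncatedStableMeasure_restrict_closedBall (hrR : r ≤ R) :
    (truncatedStableMeasure E α R).restrict (closedBall 0 r) = truncatedStableMeasure E α r := by
  rw [truncatedStableMeasure, restrict_withDensity measurableSet_closedBall,
    Measure.restrict_restrict measurableSet_closedBall,
    Set.inter_eq_left.2 (closedBall_subset_closedBall hrR), truncatedStableMeasure]

lemma truncatedStableExponent_eq_setIntegral (u : E) :
    truncatedStableExponent α R u =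
      ∫ y in closedBall 0 R, (1 - Real.cos ⟪u, y⟫) / ‖y‖ ^ (finrank ℝ E + α) := by
  rw [truncatedStableExponent, levyExponent, truncatedStableMeasure,
    integral_withDensity_eq_integral_toReal_smul (by fun_prop)
      (.of_forall fun y ↦ ENNReal.ofReal_lt_top)]
  refine integral_congr_ae (.of_forall fun y ↦ ?_)
  beta_reduce
  rw [ENNReal.toReal_ofReal (by positivity), smul_eq_mul, inv_mul_eq_div]

lemma truncatedStableExponent_nonneg (u : E) : 0 ≤ truncatedStableExponent α R u :=
  levyExponent_nonneg u

lemma truncatedStableExponent_eq_rpow_mul (hr : 0 < r) (u : E) :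
    truncatedStableExponent α r u = r ^ (-α) * truncatedStableExponent α 1 (r • u) := by
  have hscale (y : E) : (1 - Real.cos ⟪u, r • y⟫) / ‖r • y‖ ^ (finrank ℝ E + α) =
      r ^ (-(finrank ℝ E + α)) * ((1 - Real.cos ⟪r • u, y⟫) / ‖y‖ ^ (finrank ℝ E + α)) := by
    rw [norm_smul, Real.norm_of_nonneg hr.le, Real.mul_rpow hr.le (norm_nonneg _),
      Real.rpow_neg hr.le, real_inner_smul_right, real_inner_smul_left]
    field_simp
  have hsubst := Measure.setIntegral_comp_smul_of_pos volume
    (fun y : E ↦ (1 - Real.cos ⟪u, y⟫) / ‖y‖ ^ (finrank ℝ E + α)) (closedBall 0 1) hr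
  rw [_root_.smul_closedBall _ _ zero_le_one, smul_zero, mul_one, Real.norm_of_nonneg hr.le,
    ← truncatedStableExponent_eq_setIntegral] at hsubst
  simp only [hscale] at hsubst
  rw [integral_const_mul, ← truncatedStableExponent_eq_setIntegral, smul_eq_mul,
    eq_inv_mul_iff_mul_eq₀ (by positivity), ← mul_assoc, ← Real.rpow_natCast,
    ← Real.rpow_add hr] at hsubst
  rw [← hsubst, neg_add, add_neg_cancel_left]

variable [Nontrivial E]

lemma integrable_norm_pow_truncatedStableMeasure {n : ℕ} (hn : α < n) :
    Integrable (fun y ↦ ‖y‖ ^ n) (truncatedStableMeasure E α R) := by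
  rw [truncatedStableMeasure, integrable_withDensity_iff_integrable_smul' (by fun_prop)
    (.of_forall fun y ↦ ENNReal.ofReal_lt_top)]
  simp only [ENNReal.toReal_ofReal (inv_nonneg.2 (Real.rpow_nonneg (norm_nonneg _) _)), smul_eq_mul]
  have hball := integrableOn_ball_of_norm_le_rpow (E := E) (μ := volume) (C := 1) (r := R + 1)
    (f := fun y ↦ (‖y‖ ^ (finrank ℝ E + α))⁻¹ * ‖y‖ ^ n) (α := finrank ℝ E + α - n)
    Module.finrank_pos (by linarith) ?_ (Measurable.aestronglyMeasurable (by fun_prop))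
  · exact hball.mono_set (closedBall_subset_ball (by linarith))
  · filter_upwards [ae_restrict_of_ae (Measure.ae_ne volume 0)] with y hy
    have hy0 : 0 < ‖y‖ := norm_pos_iff.2 hy
    rw [Real.norm_of_nonneg (by positivity), one_mul, ← Real.rpow_neg hy0.le,
      ← Real.rpow_natCast, ← Real.rpow_add hy0]
    exact (congrArg _ (by ring)).le

lemma integrable_norm_sq_truncatedStableMeasure (hα : α < 2) :
    Integrable (fun y ↦ ‖y‖ ^ 2) (truncatedStableMeasure E α R) :=
  integrable_norm_pow_truncatedStableMeasure hα

lemma truncatedStableExponent_add_levyExponent_restrict_compl (hα : α < 2) (hrR : r ≤ R) (u : E) :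
    truncatedStableExponent α r u +
        levyExponent ((truncatedStableMeasure E α R).restrict (closedBall 0 r)ᶜ) u =
      truncatedStableExponent α R u := by
  rw [truncatedStableExponent, ← truncatedStableMeasure_restrict_closedBall hrR]
  exact levyExponent_restrict_add_restrict_compl (integrable_norm_sq_truncatedStableMeasure hα)
    measurableSet_closedBall u

lemma truncatedStableExponent_mono (hα : α < 2) (hrR : r ≤ R) (u : E) :
    truncatedStableExponent α r u ≤ truncatedStableExponent α R u := by
  rw [← truncatedStableExponent_add_levyExponent_restrict_compl hα hrR]
  exact le_add_of_nonneg_right (levyExponent_nonneg u)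

lemma integrableOn_one_sub_cos_inner_div_rpow (hα : α < 2) (u : E) :
    IntegrableOn (fun y ↦ (1 - Real.cos ⟪u, y⟫) / ‖y‖ ^ (finrank ℝ E + α)) (closedBall 0 R) := by
  have h := integrable_one_sub_cos_inner (integrable_norm_sq_truncatedStableMeasure (R := R) hα) u
  rw [truncatedStableMeasure, integrable_withDensity_iff_integrable_smul' (by fun_prop)
    (.of_forall fun y ↦ ENNReal.ofReal_lt_top)] at h
  refine h.congr (.of_forall fun y ↦ ?_)
  beta_reduce
  rw [ENNReal.toReal_ofReal (by positivity), smul_eq_mul, inv_mul_eq_div]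

lemma truncatedStableExponent_one_pos (hα : α < 2) {u : E} (hu : u ≠ 0) :
    0 < truncatedStableExponent α 1 u := by
  have hopen : IsOpen (ball (0 : E) 1 ∩ {y | ⟪u, y⟫ ∈ Set.Ioo 0 1}) :=
    isOpen_ball.inter (isOpen_Ioo.preimage (by fun_prop))
  have hne : (ball (0 : E) 1 ∩ {y | ⟪u, y⟫ ∈ Set.Ioo 0 1}).Nonempty := by
    have hu0 : 0 < ‖u‖ := norm_pos_iff.2 hu
    refine ⟨(1 + ‖u‖ ^ 2)⁻¹ • u, ?_, ?_, ?_⟩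
    · rw [mem_ball_zero_iff, norm_smul, Real.norm_of_nonneg (by positivity),
        inv_mul_lt_one₀ (by positivity)]
      nlinarith [sq_nonneg (‖u‖ - 1)]
    · rw [real_inner_smul_right, real_inner_self_eq_norm_sq]
      positivity
    · rw [real_inner_smul_right, real_inner_self_eq_norm_sq, inv_mul_lt_one₀ (by positivity)]
      linarith
  rw [truncatedStableExponent_eq_setIntegral, setIntegral_pos_iff_support_of_nonneg_ae
    (.of_forall fun y ↦ div_nonneg (sub_nonneg.2 (Real.cos_le_one _)) (by positivity))
    (integrableOn_one_sub_cos_inner_div_rpow hα u)]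
  refine (hopen.measure_pos volume hne).trans_le (measure_mono ?_)
  rintro y ⟨hy, hinner⟩
  have hy0 : y ≠ 0 := by rintro rfl; simp at hinner
  have hcos : Real.cos ⟪u, y⟫ < 1 := by
    rw [← Real.cos_zero]
    exact Real.cos_lt_cos_of_nonneg_of_le_pi le_rfl (by linarith [Real.pi_gt_three, hinner.2])
      hinner.1
  exact ⟨(div_pos (sub_pos.2 hcos) (Real.rpow_pos_of_pos (norm_pos_iff.2 hy0) _)).ne',
    ball_subset_closedBall hy⟩

lemma hasTemperateGrowth_truncatedStableExponent (hα : α < 2) :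
    (truncatedStableExponent (E := E) α R).HasTemperateGrowth :=
  hasTemperateGrowth_levyExponent fun n ↦ integrable_norm_pow_truncatedStableMeasure <| by
    push_cast
    linarith [n.cast_nonneg (α := ℝ)]

lemma exists_mul_rpow_le_truncatedStableExponent (hα : α < 2) :
    ∃ κ > 0, ∀ u : E, 1 ≤ ‖u‖ → κ * ‖u‖ ^ α ≤ truncatedStableExponent α 1 u := by
  obtain ⟨v, hv, hmin⟩ := (isCompact_sphere (0 : E) 1).exists_isMinOn
    (NormedSpace.sphere_nonempty.2 zero_le_one)
    (hasTemperateGrowth_truncatedStableExponent (R := 1) hα).1.continuous.continuousOn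
  refine ⟨truncatedStableExponent α 1 v,
    truncatedStableExponent_one_pos hα (ne_of_mem_sphere hv one_ne_zero), fun u hu ↦ ?_⟩
  have hu0 : 0 < ‖u‖ := one_pos.trans_le hu
  calc truncatedStableExponent α 1 v * ‖u‖ ^ α
      ≤ truncatedStableExponent α 1 (‖u‖⁻¹ • u) * ‖u‖ ^ α := by
        gcongr
        exact hmin (by simp [norm_smul, hu0.ne'])
    _ = ‖u‖⁻¹ ^ (-α) * truncatedStableExponent α 1 (‖u‖⁻¹ • u) := by
        rw [Real.inv_rpow hu0.le, Real.rpow_neg hu0.le, inv_inv, mul_comm]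
    _ = truncatedStableExponent α ‖u‖⁻¹ u :=
        (truncatedStableExponent_eq_rpow_mul (inv_pos.2 hu0) u).symm
    _ ≤ truncatedStableExponent α 1 u :=
        truncatedStableExponent_mono hα (inv_le_one_of_one_le₀ hu) u

lemma exists_schwartzMap_eq_exp_neg_mul_truncatedStableExponent (hα₀ : 0 < α) (hα : α < 2) {t : ℝ}
    (ht : 0 < t) :
    ∃ g : 𝓢(E, ℝ), ∀ u, g u = Real.exp (-(t * truncatedStableExponent α 1 u)) := by
  obtain ⟨κ, hκ, hlower⟩ := exists_mul_rpow_le_truncatedStableExponent (E := E) hα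
  refine exists_schwartzMap_eq_exp_neg
    ((Function.HasTemperateGrowth.const t).mul (hasTemperateGrowth_truncatedStableExponent hα))
    (exists_one_add_norm_pow_mul_exp_neg_le
      (fun u ↦ mul_nonneg ht.le (truncatedStableExponent_nonneg u)) hα₀ (mul_pos ht hκ)
      fun u hu ↦ ?_)
  rw [mul_assoc]
  exact mul_le_mul_of_nonneg_left (hlower u hu) ht.le

end TruncatedStable

section TruncatedStableDensity

variable {E : Type*} [NormedAddCommGroup E] [InnerProductSpace ℝ E] [FiniteDimensional ℝ E]
  [MeasurableSpace E] [BorelSpace E] {α t : ℝ}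

/-- The density at time `t` of the `α`-stable process on `E` with jumps truncated at size `1`; it
is `pdens` on `EuclideanSpace ℝ (Fin d)`. -/
noncomputable def truncatedStableDensity (α t : ℝ) : E → ℝ :=
  cosTransform fun u ↦ Real.exp (-(t * truncatedStableExponent α 1 u))

lemma pdens_eq_truncatedStableDensity (d : ℕ) : pdens d α t = truncatedStableDensity α t := by
  have hPsi : Psi d α = truncatedStableExponent α 1 := by
    ext u
    rw [truncatedStableExponent_eq_setIntegral, finrank_euclideanSpace_fin, Psi]
  ext x
  rw [pdens, truncatedStableDensity, cosTransform, finrank_euclideanSpace_fin, hPsi]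
  simp only [neg_mul]

variable [Nontrivial E]

lemma exists_schwartzMap_eq_truncatedStableDensity (hα₀ : 0 < α) (hα : α < 2) (ht : 0 < t) :
    ∃ S : 𝓢(E, ℝ), ⇑S = truncatedStableDensity α t := by
  obtain ⟨g, hg⟩ := exists_schwartzMap_eq_exp_neg_mul_truncatedStableExponent (E := E) hα₀ hα ht
  obtain ⟨S, hS⟩ := exists_schwartzMap_eq_cosTransform g
  exact ⟨S, by rw [funext hS, funext hg, truncatedStableDensity]⟩

/-- The law at time `t` of the jumps of size in `(r, 1]`. -/
lemma exists_isProbabilityMeasure_charFun_mul_exp_eq (hα : α < 2) (ht : 0 ≤ t) {r : ℝ}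
    (hr : 0 < r) (hr1 : r ≤ 1) :
    ∃ (μ : Measure E) (h : E → ℝ), IsProbabilityMeasure μ ∧ (∀ u, charFun μ u = h u) ∧
      ∀ u, h u * Real.exp (-(t * r ^ (-α) * truncatedStableExponent α 1 (r • u))) =
        Real.exp (-(t * truncatedStableExponent α 1 u)) := by
  set ν := (truncatedStableMeasure E α 1).restrict (closedBall 0 r)ᶜ
  have : IsFiniteMeasure ν :=
    isFiniteMeasure_restrict_compl_closedBall (integrable_norm_sq_truncatedStableMeasure hα) hr
  have : ν.IsNegInvariant := isNegInvariant_restrict _ (by simp)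
  obtain ⟨μ, hμ, hchar⟩ := exists_isProbabilityMeasure_charFun_eq_exp_neg (ν := ν) ht
  refine ⟨μ, fun u ↦ Real.exp (-(t * levyExponent ν u)), hμ, fun u ↦ hchar u, fun u ↦ ?_⟩
  rw [← Real.exp_add, mul_assoc, ← truncatedStableExponent_eq_rpow_mul hr,
    ← truncatedStableExponent_add_levyExponent_restrict_compl hα hr1]
  congr 1
  ring

lemma integral_norm_fderiv_truncatedStableDensity_le (hα₀ : 0 < α) (hα : α < 2) (ht : 0 < t)
    {r : ℝ} (hr : 0 < r) (hr1 : r ≤ 1) :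
    ∫ y : E, ‖fderiv ℝ (truncatedStableDensity α t) y‖ ≤
      r⁻¹ * ∫ y : E, ‖fderiv ℝ (truncatedStableDensity α (t * r ^ (-α))) y‖ := by
  obtain ⟨μ, h, _, hμ, hexp⟩ := exists_isProbabilityMeasure_charFun_mul_exp_eq (E := E) hα ht.le
    hr hr1
  obtain ⟨g, hg⟩ := exists_schwartzMap_eq_exp_neg_mul_truncatedStableExponent (E := E) hα₀ hα
    (mul_pos ht (Real.rpow_pos_of_pos hr (-α)))
  let gr : 𝓢(E, ℝ) :=
    SchwartzMap.compCLMOfContinuousLinearEquiv ℝ (.smulLeft (Units.mk0 r hr.ne')) g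
  have hgr : ⇑gr = fun u ↦ g (r • u) := rfl
  calc ∫ y : E, ‖fderiv ℝ (truncatedStableDensity α t) y‖
      = ∫ y, ‖fderiv ℝ (cosTransform fun u ↦ h u * gr u) y‖ := by
        simp only [truncatedStableDensity, hgr, hg, hexp]
    _ ≤ ∫ y, ‖fderiv ℝ (cosTransform gr) y‖ := integral_norm_fderiv_cosTransform_mul_le hμ gr
    _ = r⁻¹ * ∫ y, ‖fderiv ℝ (cosTransform g) y‖ := by
        rw [hgr, integral_norm_fderiv_cosTransform_comp_smul g hr]
    _ = r⁻¹ * ∫ y : E, ‖fderiv ℝ (truncatedStableDensity α (t * r ^ (-α))) y‖ := by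
        rw [funext hg, truncatedStableDensity]

lemma integral_norm_fderiv_truncatedStableDensity_le_rpow (hα₀ : 0 < α) (hα : α < 2) (ht : 0 < t)
    {T : ℝ} (htT : t ≤ T) :
    ∫ y : E, ‖fderiv ℝ (truncatedStableDensity α t) y‖ ≤
      T ^ (1 / α) * t ^ (-(1 / α)) * ∫ y : E, ‖fderiv ℝ (truncatedStableDensity α T) y‖ := by
  have hT : 0 < T := ht.trans_le htT
  set r : ℝ := (t / T) ^ (1 / α) with hr
  have hr0 : 0 < r := by positivity
  have hr1 : r ≤ 1 := Real.rpow_le_one (by positivity) ((div_le_one hT).2 htT) (by positivity)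
  have hrα : t * r ^ (-α) = T := by
    have hexponent : 1 / α * -α = -1 := by field_simp
    rw [hr, ← Real.rpow_mul (by positivity), hexponent, Real.rpow_neg_one]
    field_simp
  have hrinv : r⁻¹ = T ^ (1 / α) * t ^ (-(1 / α)) := by
    rw [hr, ← Real.inv_rpow (by positivity), inv_div, Real.div_rpow hT.le ht.le,
      Real.rpow_neg ht.le, div_eq_mul_inv]
  simpa only [hrα, hrinv] using
    integral_norm_fderiv_truncatedStableDensity_le (E := E) hα₀ hα ht hr0 hr1

end TruncatedStableDensity

lemma Pt_eq_integral_pdens_sub (d : ℕ) (α t : ℝ) (φ : EuclideanSpace ℝ (Fin d) → ℝ) :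
    Pt d α φ t = fun x ↦ ∫ z, φ z * pdens d α t (z - x) := by
  ext x
  rw [Pt, ← integral_add_left_eq_self (fun z ↦ φ z * pdens d α t (z - x)) x]
  simp only [add_sub_cancel_left]

theorem stmt_7_general (d : ℕ) [NeZero d] (α T : ℝ) (hα₀ : 0 < α) (hα : α < 2) :
    ∃ C : ℝ, ∀ φ : EuclideanSpace ℝ (Fin d) → ℝ, Measurable φ →
      ∀ M : ℝ, (∀ x, |φ x| ≤ M) →
        ∀ t : ℝ, 0 < t → t ≤ T →
          ContDiff ℝ 1 (Pt d α φ t) ∧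
          ∀ x : EuclideanSpace ℝ (Fin d), ‖fderiv ℝ (Pt d α φ t) x‖ ≤ C * M * t ^ (-(1 / α)) := by
  refine ⟨T ^ (1 / α) *
    ∫ y : EuclideanSpace ℝ (Fin d), ‖fderiv ℝ (truncatedStableDensity α T) y‖,
    fun φ hφ M hM t ht htT ↦ ?_⟩
  have hM₀ : 0 ≤ M := (abs_nonneg _).trans (hM 0)
  obtain ⟨S, hS⟩ := exists_schwartzMap_eq_truncatedStableDensity
    (E := EuclideanSpace ℝ (Fin d)) hα₀ hα ht
  have hPt : Pt d α φ t = fun x ↦ ∫ z, φ z • S (z - x) := by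
    simp only [Pt_eq_integral_pdens_sub, pdens_eq_truncatedStableDensity, hS, smul_eq_mul]
  rw [hPt]
  refine ⟨contDiff_one_integral_smul_schwartz_sub S hφ hM, fun x ↦ ?_⟩
  calc ‖fderiv ℝ (fun x ↦ ∫ z, φ z • S (z - x)) x‖
      ≤ M * ∫ y, ‖fderiv ℝ S y‖ := norm_fderiv_integral_smul_schwartz_sub_le volume S hφ hM x
    _ ≤ M * (T ^ (1 / α) * t ^ (-(1 / α)) * ∫ y, ‖fderiv ℝ (truncatedStableDensity α T) y‖) := by
        rw [hS]
        gcongr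
        exact integral_norm_fderiv_truncatedStableDensity_le_rpow hα₀ hα ht htT
    _ = _ := by ring

/-- Gradient estimate `|∂(P_t φ)/∂x_i| ≤ C ‖φ‖_∞ t^{-1/α}` for bounded measurable `φ`. -/
theorem stmt_7 (d : ℕ) (hd : 2 ≤ d) (α T : ℝ) (hα1 : 1 < α) (hα2 : α < 2) (hT : 0 < T) :
    ∃ C : ℝ, ∀ φ : EuclideanSpace ℝ (Fin d) → ℝ, Measurable φ →
      ∀ M : ℝ, (∀ x, |φ x| ≤ M) →
        ∀ t : ℝ, 0 < t → t ≤ T →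
          ContDiff ℝ 1 (Pt d α φ t) ∧
          ∀ (x : EuclideanSpace ℝ (Fin d)) (i : Fin d),
            |fderiv ℝ (Pt d α φ t) x (EuclideanSpace.single i 1)| ≤
              C * M * t ^ (-(1 / α)) := by
  have : NeZero d := ⟨by lia⟩
  obtain ⟨C, hC⟩ := stmt_7_general d α T (by linarith) hα2
  refine ⟨C, fun φ hφ M hM t ht htT ↦ ⟨(hC φ hφ M hM t ht htT).1, fun x i ↦ ?_⟩⟩
  have hpartial := (fderiv ℝ (Pt d α φ t) x).le_opNorm (EuclideanSpace.single i (1 : ℝ))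
  rw [PiLp.norm_single, norm_one, mul_one, Real.norm_eq_abs] at hpartial
  exact hpartial.trans ((hC φ hφ M hM t ht htT).2 x)
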